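/- arXiv:2003.05876 — 2 statements merged into one kernel-verified Lean document; each statement's English description precedes it below -/
import Mathlib

section
/- For every integer N ≥ 1, the exceptional-point matching identity Q_BH⁻¹ · H_BH(1) · Q_BH = Q_AO⁻¹ · H_AO · Q_AO holds; i.e. the two exceptional-point Hamiltonians H_BH(1) and H_AO are reduced to one and the same canonical matrix by their respective transition matrices. -/
/-!
Both sides equal the nilpotent Jordan block `J`.

For the oscillator, put `n = N - 1`. The square roots in `C` are chosen so that conjugation by `C`
turns the couplings of `H_AO` into integers: `g_k c_{k+1} = (n - k) c_k` and
`g_k c_k = (k + 1) c_{k+1}`. The chain relation `H_AO Q_AO = Q_AO J` then becomes a three-term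
recurrence for binomial coefficients (`pascal_recurrence`), which follows from Pascal's rule
and the absorption identity; the factorials in `F` absorb the factor `-(n - q)` it produces.

For Bose–Hubbard, the phase matrices `T = diag(i^k)` and `E = diag(i^{N-1-k})` satisfy
`H_BH(1) T = i T H_AO` and `Q_BH = T Q_AO E`, while `i J E = E J`. Hence `H_BH(1) Q_BH = Q_BH J`
is inherited from the oscillator.

Both transition matrices are invertible since `P` becomes unitriangular when its rows are reversed,
so the two chain relations can be solved for `J`.
-/

open Matrix Polynomial Finset

/-- off-diagonal coupling `√((N−1−k)(k+1))`. -/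
noncomputable def gCoup (N k : ℕ) : ℝ := Real.sqrt (((N - 1 - k) * (k + 1) : ℕ))

/-- the non-Hermitian Bose–Hubbard Hamiltonian `H_BH(z)`. -/
noncomputable def HBH (N : ℕ) (z : ℂ) : Matrix (Fin N) (Fin N) ℂ :=
  fun k l =>
    if (k : ℕ) = (l : ℕ) then -Complex.I * (((N : ℤ) - 1 - 2 * (k : ℕ) : ℤ) : ℂ) * z
    else if (l : ℕ) = (k : ℕ) + 1 then (gCoup N k : ℂ)
    else if (k : ℕ) = (l : ℕ) + 1 then (gCoup N l : ℂ)
    else 0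

/-- the EP limit of the discrete anharmonic-oscillator Hamiltonian `H_AO`. -/
noncomputable def HAO (N : ℕ) : Matrix (Fin N) (Fin N) ℂ :=
  fun k l =>
    if (k : ℕ) = (l : ℕ) then -(((N : ℤ) - 1 - 2 * (k : ℕ) : ℤ) : ℂ)
    else if (l : ℕ) = (k : ℕ) + 1 then (gCoup N k : ℂ)
    else if (k : ℕ) = (l : ℕ) + 1 then -(gCoup N l : ℂ)
    else 0

/-- the nilpotent Jordan block `J`. -/
noncomputable def Jmat (N : ℕ) : Matrix (Fin N) (Fin N) ℂ :=
  fun k l => if (l : ℕ) = (k : ℕ) + 1 then 1 else 0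

/-- the Pascal-triangle matrix `P`. -/
noncomputable def Pmat (N : ℕ) : Matrix (Fin N) (Fin N) ℂ :=
  fun m q => ((N - 1 - (m : ℕ)).choose (q : ℕ) : ℂ)

/-- the diagonal factor `D` with `D_{k,k} = i^k·√(binom(N−1,k))`. -/
noncomputable def Dmat (N : ℕ) : Matrix (Fin N) (Fin N) ℂ :=
  Matrix.diagonal fun k => Complex.I ^ (k : ℕ) * (Real.sqrt ((N - 1).choose (k : ℕ)) : ℂ)

/-- the diagonal factor `G` with `G_{k,k} = (−i)^{N−1−k}·(N−1−k)!`. -/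
noncomputable def Gmat (N : ℕ) : Matrix (Fin N) (Fin N) ℂ :=
  Matrix.diagonal fun k => (-Complex.I) ^ (N - 1 - (k : ℕ)) * ((N - 1 - (k : ℕ)).factorial : ℂ)

/-- the Bose–Hubbard transition matrix `Q_BH = D·P·G`. -/
noncomputable def QBH (N : ℕ) : Matrix (Fin N) (Fin N) ℂ := Dmat N * Pmat N * Gmat N

/-- the diagonal factor `C` with `C_{k,k} = √(binom(N−1,k))`. -/
noncomputable def Cmat (N : ℕ) : Matrix (Fin N) (Fin N) ℂ :=
  Matrix.diagonal fun k => (Real.sqrt ((N - 1).choose (k : ℕ)) : ℂ)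

/-- the diagonal factor `F` with `F_{k,k} = (−1)^{N−1−k}·(N−1−k)!`. -/
noncomputable def Fmat (N : ℕ) : Matrix (Fin N) (Fin N) ℂ :=
  Matrix.diagonal fun k => (-1 : ℂ) ^ (N - 1 - (k : ℕ)) * ((N - 1 - (k : ℕ)).factorial : ℂ)

/-- the anharmonic-oscillator transition matrix `Q_AO = C·P·F`. -/
noncomputable def QAO (N : ℕ) : Matrix (Fin N) (Fin N) ℂ := Cmat N * Pmat N * Fmat N

/-- `β = −1 + i`. -/
noncomputable def betaC : ℂ := -1 + Complex.I

/-- the diagonal factor `B` with `B_{k,k} = (−β)^{−k}`. -/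
noncomputable def Bmat (N : ℕ) : Matrix (Fin N) (Fin N) ℂ :=
  Matrix.diagonal fun k => ((-betaC) ^ (k : ℕ))⁻¹

/-- the diagonal factor `A` with `A_{k,k} = β^k`. -/
noncomputable def Amat (N : ℕ) : Matrix (Fin N) (Fin N) ℂ :=
  Matrix.diagonal fun k => betaC ^ (k : ℕ)

/-- the upper-triangular real matrix `R` with
`R_{n,n+q} = √(binom(n+q,n)·binom(N−1−n,q))`. -/
noncomputable def Rmat (N : ℕ) : Matrix (Fin N) (Fin N) ℂ :=
  fun n k =>
    if (n : ℕ) ≤ (k : ℕ) then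
      (Real.sqrt (((k : ℕ).choose (n : ℕ)) * ((N - 1 - (n : ℕ)).choose ((k : ℕ) - (n : ℕ)))) : ℂ)
    else 0

/-- the transition-matrix product `S = B·R·A`. -/
noncomputable def Smat (N : ℕ) : Matrix (Fin N) (Fin N) ℂ := Bmat N * Rmat N * Amat N

/-- the discrete anharmonic-oscillator Hamiltonian `H_AO(γ)` with coupling parameter `γ`. -/
noncomputable def HAOg (N : ℕ) (γ : ℝ) : Matrix (Fin N) (Fin N) ℝ :=
  fun k l =>
    if (k : ℕ) = (l : ℕ) then -((N : ℝ) - 1 - 2 * (k : ℕ))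
    else if (l : ℕ) = (k : ℕ) + 1 then
      Real.sqrt ((((N - 1 - (k : ℕ)) * ((k : ℕ) + 1) : ℕ)) * (1 - γ))
    else if (k : ℕ) = (l : ℕ) + 1 then
      -Real.sqrt ((((N - 1 - (l : ℕ)) * ((l : ℕ) + 1) : ℕ)) * (1 - γ))
    else 0

/-- the exchange (parity) matrix `Π`. -/
noncomputable def PiMat (N : ℕ) : Matrix (Fin N) (Fin N) ℂ :=
  fun k l => if (k : ℕ) + (l : ℕ) = N - 1 then 1 else 0

lemma gCoup_mul_sqrt_succ (n k : ℕ) :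
    gCoup (n + 1) k * √(n.choose (k + 1)) = ((n - k : ℕ) : ℝ) * √(n.choose k) := by
  have h : (n.choose (k + 1) : ℝ) * (k + 1) = n.choose k * ((n - k : ℕ) : ℝ) := by
    exact_mod_cast Nat.choose_succ_right_eq n k
  rw [gCoup, ← Real.sqrt_mul (by positivity), Nat.add_sub_cancel]
  rw [show (((n - k) * (k + 1) : ℕ) : ℝ) * n.choose (k + 1)
      = ((n - k : ℕ) : ℝ) ^ 2 * n.choose k by push_cast; linear_combination ((n - k : ℕ) : ℝ) * h]
  rw [Real.sqrt_mul (by positivity), Real.sqrt_sq (by positivity)]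

lemma gCoup_mul_sqrt (n k : ℕ) :
    gCoup (n + 1) k * √(n.choose k) = ((k : ℝ) + 1) * √(n.choose (k + 1)) := by
  have h : (n.choose (k + 1) : ℝ) * (k + 1) = n.choose k * ((n - k : ℕ) : ℝ) := by
    exact_mod_cast Nat.choose_succ_right_eq n k
  rw [gCoup, ← Real.sqrt_mul (by positivity), Nat.add_sub_cancel]
  rw [show (((n - k) * (k + 1) : ℕ) : ℝ) * n.choose k
      = ((k : ℝ) + 1) ^ 2 * n.choose (k + 1) by push_cast; linear_combination -((k : ℝ) + 1) * h]
  rw [Real.sqrt_mul (by positivity), Real.sqrt_sq (by positivity)]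

/-- The action of `H_AO` on a vector given by a sequence `v`. The entry `v (k + 1)` lies outside the
index range for `k = n`, where its coefficient `gCoup (n + 1) n` vanishes. -/
lemma HAO_sum (n : ℕ) (k : Fin (n + 1)) (v : ℕ → ℂ) :
    ∑ l : Fin (n + 1), HAO (n + 1) k l * v l =
      -((n : ℂ) - 2 * (k : ℕ)) * v k + gCoup (n + 1) k * v (k + 1)
        - (if (k : ℕ) = 0 then 0 else (gCoup (n + 1) (k - 1) : ℂ) * v (k - 1)) := by
  obtain ⟨k, hk⟩ := k
  obtain ⟨F, hF⟩ : ∃ F : ℕ → ℂ, F =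
      fun l => (if k = l then -((n : ℂ) - 2 * k) * v k else 0)
        + (if k + 1 = l then (gCoup (n + 1) k : ℂ) * v (k + 1) else 0)
        - (if k - 1 = l then
            (if k = 0 then 0 else (gCoup (n + 1) (k - 1) : ℂ) * v (k - 1)) else 0) := ⟨_, rfl⟩
  have hsplit : ∀ l : Fin (n + 1), HAO (n + 1) ⟨k, hk⟩ l * v l = F l := by
    rintro ⟨l, hl⟩
    simp only [HAO, hF]
    rcases lt_trichotomy k l with h | rfl | h
    · by_cases h1 : l = k + 1
      · subst h1
        simp [show ¬ k - 1 = k + 1 by omega]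
      · simp [h.ne, h1, show ¬ k + 1 = l by omega, show ¬ k = l + 1 by omega,
          show ¬ k - 1 = l by omega]
    · by_cases h0 : k = 0
      · simp [h0]
      · simp [show ¬ k - 1 = k by omega]
    · by_cases h1 : k = l + 1
      · subst h1
        simp [show ¬ l = l + 1 + 1 by omega, show ¬ l + 1 + 1 = l by omega]
      · simp [h.ne', h1, show ¬ l = k + 1 by omega, show ¬ k + 1 = l by omega,
          show ¬ k - 1 = l by omega]
  rw [Finset.sum_congr rfl fun l _ => hsplit l, Fin.sum_univ_eq_sum_range F]
  simp only [hF]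
  rw [Finset.sum_sub_distrib, Finset.sum_add_distrib, Finset.sum_ite_eq, Finset.sum_ite_eq,
    Finset.sum_ite_eq, if_pos (Finset.mem_range.2 hk),
    if_pos (show k - 1 ∈ Finset.range (n + 1) from Finset.mem_range.2 (by omega))]
  by_cases h : k + 1 ∈ Finset.range (n + 1)
  · rw [if_pos h]
  · rw [if_neg h]
    have : k = n := by
      rw [Finset.mem_range] at h
      omega
    subst this
    simp [gCoup]

lemma sum_mul_Jmat (n : ℕ) (q : Fin (n + 1)) (v : ℕ → ℂ) :
    ∑ l : Fin (n + 1), v l * Jmat (n + 1) l q = if (q : ℕ) = 0 then 0 else v (q - 1) := by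
  obtain ⟨q, hq⟩ := q
  obtain ⟨F, hF⟩ : ∃ F : ℕ → ℂ, F =
      fun l => if q - 1 = l then (if q = 0 then 0 else v (q - 1)) else 0 := ⟨_, rfl⟩
  have hsplit : ∀ l : Fin (n + 1), v l * Jmat (n + 1) l ⟨q, hq⟩ = F l := by
    rintro ⟨l, hl⟩
    simp only [Jmat, hF]
    rcases q with _ | q
    · simp
    · by_cases h : q = l
      · simp [h]
      · simp [h]
  rw [Finset.sum_congr rfl fun l _ => hsplit l, Fin.sum_univ_eq_sum_range F]
  simp only [hF]
  rw [Finset.sum_ite_eq, if_pos (Finset.mem_range.2 (by omega))]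

/-- The columns of the Pascal matrix form a chain under the integer tridiagonal matrix
`C⁻¹ H_AO C`; here `a = n - m`, and `m = 0` is allowed since then the last term on the left
disappears. -/
lemma pascal_recurrence (a m q : ℕ) :
    -((a : ℂ) - m) * (a.choose (q + 1)) + a * ((a - 1).choose (q + 1)) - m * ((a + 1).choose (q + 1))
      = -((a : ℂ) + m - q) * a.choose q := by
  rcases a with _ | a
  · rcases q with _ | q
    · simp
    · simp [Nat.choose_eq_zero_of_lt (show 1 < q + 1 + 1 by omega)]
  · have h1 : ((a : ℂ) + 1) * a.choose q = ((a + 1).choose (q + 1)) * (q + 1) := by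
      exact_mod_cast Nat.add_one_mul_choose_eq a q
    have h2 : ((a + 1).choose (q + 1) : ℂ) = a.choose q + a.choose (q + 1) := by
      exact_mod_cast Nat.choose_succ_succ a q
    have h3 : ((a + 1 + 1).choose (q + 1) : ℂ) = (a + 1).choose q + (a + 1).choose (q + 1) := by
      exact_mod_cast Nat.choose_succ_succ (a + 1) q
    have h4 : ((a + 1).choose (q + 1) : ℂ) * (q + 1) = (a + 1).choose q * (a + 1 - q) := by
      rcases le_or_gt q (a + 1) with h | h
      · have := Nat.choose_succ_right_eq (a + 1) q
        have h' : (((a + 1 - q : ℕ)) : ℂ) = a + 1 - q := by push_cast [Nat.cast_sub h]; ring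
        rw [← h']
        exact_mod_cast this
      · simp [Nat.choose_eq_zero_of_lt h, Nat.choose_eq_zero_of_lt (Nat.lt_succ_of_lt h)]
    rw [Nat.add_sub_cancel, h3]
    push_cast
    linear_combination (-(a : ℂ) - 1) * h2 - h1 - h4

lemma QAO_apply (n : ℕ) (k q : Fin (n + 1)) :
    QAO (n + 1) k q = (√(n.choose k) : ℂ) * ((n - k : ℕ).choose q : ℂ)
      * ((-1) ^ (n - q : ℕ) * ((n - q : ℕ).factorial : ℂ)) := by
  simp [QAO, Cmat, Fmat, Pmat, Matrix.mul_diagonal, Matrix.diagonal_mul]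

lemma HAO_mul_QAO (n : ℕ) : HAO (n + 1) * QAO (n + 1) = QAO (n + 1) * Jmat (n + 1) := by
  ext k q
  rw [Matrix.mul_apply, Matrix.mul_apply]
  simp only [QAO_apply]
  rw [HAO_sum n k (fun l => (√(n.choose l) : ℂ) * ((n - l : ℕ).choose q : ℂ)
      * ((-1) ^ (n - q : ℕ) * ((n - q : ℕ).factorial : ℂ))),
    sum_mul_Jmat n q (fun l => (√(n.choose k) : ℂ) * ((n - k : ℕ).choose l : ℂ)
      * ((-1) ^ (n - l : ℕ) * ((n - l : ℕ).factorial : ℂ)))]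
  obtain ⟨m, hm⟩ := k
  obtain ⟨q, hq⟩ := q
  simp only
  obtain ⟨a, rfl⟩ : ∃ a, n = a + m := ⟨n - m, by omega⟩
  have hup : (gCoup (a + m + 1) m : ℂ) * (√((a + m).choose (m + 1)) : ℂ)
      = a * (√((a + m).choose m) : ℂ) := by
    have := gCoup_mul_sqrt_succ (a + m) m
    rw [Nat.add_sub_cancel] at this
    exact_mod_cast this
  set f : ℂ := (-1) ^ (a + m - q) * ((a + m - q).factorial : ℂ) with hf
  have hlow : (if m = 0 then 0 else (gCoup (a + m + 1) (m - 1) : ℂ) *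
      ((√((a + m).choose (m - 1)) : ℂ) * ((a + m - (m - 1)).choose q : ℂ) * f))
      = m * ((a + 1).choose q : ℂ) * (√((a + m).choose m) : ℂ) * f := by
    rcases m with _ | m
    · simp
    · have h : (gCoup (a + (m + 1) + 1) m : ℂ) * (√((a + (m + 1)).choose m) : ℂ)
          = ((m : ℂ) + 1) * (√((a + (m + 1)).choose (m + 1)) : ℂ) := by
        exact_mod_cast gCoup_mul_sqrt (a + (m + 1)) m
      rw [if_neg (Nat.succ_ne_zero m), Nat.add_sub_cancel,
        show a + (m + 1) - m = a + 1 by omega]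
      push_cast
      linear_combination ((a + 1).choose q : ℂ) * f * h
  rw [hlow, Nat.add_sub_cancel, show a + m - (m + 1) = a - 1 by omega]
  rcases q with _ | q
  · simp only [Nat.choose_zero_right, if_true]
    push_cast
    linear_combination f * hup
  · have hrec := pascal_recurrence a m q
    -- Moving one column to the left multiplies the diagonal entry of `F` by `-(n - q)`.
    have hff : (-1 : ℂ) ^ (a + m - q) * ((a + m - q).factorial : ℂ) = -((a : ℂ) + m - q) * f := by
      obtain ⟨r, hr⟩ : ∃ r, a + m = r + (q + 1) := ⟨a + m - (q + 1), by omega⟩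
      have hr' : (a : ℂ) + m = r + (q + 1) := by exact_mod_cast hr
      rw [hf, hr, hr', Nat.add_sub_cancel, show r + (q + 1) - q = r + 1 by omega,
        Nat.factorial_succ]
      push_cast
      ring
    rw [if_neg (Nat.succ_ne_zero q), Nat.add_sub_cancel, hff]
    push_cast
    linear_combination ((a - 1).choose (q + 1) : ℂ) * f * hup
      + (√((a + m).choose m) : ℂ) * f * hrec

/-- The phase matrix `T = diag(i^k)`, which carries `H_AO` to `-i · H_BH(1)`. -/
noncomputable def phaseT (N : ℕ) : Matrix (Fin N) (Fin N) ℂ :=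
  Matrix.diagonal fun k => Complex.I ^ (k : ℕ)

/-- The phase matrix `E = diag(i^{N-1-k})`, by which `G` differs from `F`. -/
noncomputable def phaseE (N : ℕ) : Matrix (Fin N) (Fin N) ℂ :=
  Matrix.diagonal fun k => Complex.I ^ (N - 1 - (k : ℕ))

lemma HBH_mul_phaseT (N : ℕ) : HBH N 1 * phaseT N = Complex.I • (phaseT N * HAO N) := by
  ext k l
  simp only [phaseT, Matrix.mul_diagonal, Matrix.smul_apply, Matrix.diagonal_mul, HBH, HAO,
    smul_eq_mul]
  split_ifs with h1 h2 h3
  · rw [h1]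
    ring
  · rw [h2, pow_succ]
    ring
  · rw [h3, pow_succ]
    linear_combination ((gCoup N l : ℂ) * Complex.I ^ (l : ℕ)) * Complex.I_sq
  · ring

lemma QBH_eq (N : ℕ) : QBH N = phaseT N * QAO N * phaseE N := by
  ext k l
  simp only [QBH, QAO, Dmat, Cmat, Gmat, Fmat, phaseT, phaseE, Matrix.mul_diagonal,
    Matrix.diagonal_mul]
  rw [neg_pow Complex.I]
  ring

lemma I_smul_Jmat_mul_phaseE (N : ℕ) :
    Complex.I • (Jmat N * phaseE N) = phaseE N * Jmat N := by
  ext k l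
  simp only [phaseE, Jmat, Matrix.mul_diagonal, Matrix.smul_apply, Matrix.diagonal_mul,
    smul_eq_mul]
  split_ifs with h
  · rw [show N - 1 - (k : ℕ) = (N - 1 - (l : ℕ)) + 1 by omega, pow_succ]
    ring
  · simp

lemma HBH_mul_QBH (n : ℕ) : HBH (n + 1) 1 * QBH (n + 1) = QBH (n + 1) * Jmat (n + 1) := by
  rw [QBH_eq, ← Matrix.mul_assoc, ← Matrix.mul_assoc, HBH_mul_phaseT, Matrix.smul_mul,
    Matrix.mul_assoc (phaseT _) (HAO _), HAO_mul_QAO, Matrix.smul_mul,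
    Matrix.mul_assoc _ (phaseE _) (Jmat _), ← I_smul_Jmat_mul_phaseE, Matrix.mul_smul]
  simp only [Matrix.mul_assoc]

lemma isUnit_det_Pmat (n : ℕ) : IsUnit (Pmat (n + 1)).det := by
  have hdet : ((Pmat (n + 1)).submatrix Fin.revPerm id).det = 1 := by
    have hentry : ∀ i j : Fin (n + 1),
        (Pmat (n + 1)).submatrix Fin.revPerm id i j = ((i : ℕ).choose j : ℂ) := by
      intro i j
      simp only [Pmat, Matrix.submatrix_apply, Fin.revPerm_apply, Fin.val_rev, id]
      congr 2
      omega
    rw [Matrix.det_of_isLowerTriangular _ fun i j hij => ?_]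
    · simp only [hentry, Nat.choose_self, Nat.cast_one, Finset.prod_const_one]
    · rw [hentry, Nat.choose_eq_zero_of_lt (by simpa using hij), Nat.cast_zero]
  rw [Matrix.det_permute] at hdet
  exact IsUnit.of_mul_eq_one_right _ hdet

lemma isUnit_det_QAO (n : ℕ) : IsUnit (QAO (n + 1)).det := by
  rw [QAO, Matrix.det_mul, Matrix.det_mul]
  refine ((IsUnit.mk0 _ ?_).mul (isUnit_det_Pmat n)).mul (IsUnit.mk0 _ ?_)
  · rw [Cmat, Matrix.det_diagonal, Finset.prod_ne_zero_iff]
    intro k _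
    have : 0 < n.choose k := Nat.choose_pos (Nat.lt_succ_iff.1 k.2)
    rw [Nat.add_sub_cancel]
    exact_mod_cast (Real.sqrt_pos.2 (Nat.cast_pos.2 this)).ne'
  · rw [Fmat, Matrix.det_diagonal, Finset.prod_ne_zero_iff]
    intro k _
    exact mul_ne_zero (pow_ne_zero _ (by simp)) (by exact_mod_cast Nat.factorial_ne_zero _)

lemma isUnit_det_QBH (n : ℕ) : IsUnit (QBH (n + 1)).det := by
  rw [QBH_eq, Matrix.det_mul, Matrix.det_mul]
  refine ((IsUnit.mk0 _ ?_).mul (isUnit_det_QAO n)).mul (IsUnit.mk0 _ ?_)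
  · rw [phaseT, Matrix.det_diagonal, Finset.prod_ne_zero_iff]
    exact fun k _ => pow_ne_zero _ Complex.I_ne_zero
  · rw [phaseE, Matrix.det_diagonal, Finset.prod_ne_zero_iff]
    exact fun k _ => pow_ne_zero _ Complex.I_ne_zero

/-- the exceptional-point matching identity
`Q_BH⁻¹ · H_BH(1) · Q_BH = Q_AO⁻¹ · H_AO · Q_AO`. -/
theorem ep_matching (N : ℕ) (hN : 1 ≤ N) :
    (QBH N)⁻¹ * HBH N 1 * QBH N = (QAO N)⁻¹ * HAO N * QAO N := by
  obtain ⟨n, rfl⟩ : ∃ n, N = n + 1 := ⟨N - 1, by omega⟩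
  rw [Matrix.mul_assoc, HBH_mul_QBH, Matrix.nonsing_inv_mul_cancel_left _ _ (isUnit_det_QBH n),
    Matrix.mul_assoc, HAO_mul_QAO, Matrix.nonsing_inv_mul_cancel_left _ _ (isUnit_det_QAO n)]
end

section
/- For every integer N ≥ 1, the anharmonic-oscillator Hamiltonian at its exceptional point is nilpotent of index exactly N: H_AO^N = 0 while H_AO^{N−1} ≠ 0. In particular its spectrum is fully degenerate (all N eigenvalues coincide at 0) and, for N ≥ 2, H_AO is not diagonalizable. -/
/-!
The transition matrix `QAO N = C · P · F` exhibits a single Jordan chain of `HAO N`. With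
`n = N - 1`, conjugation by the weights `√(binom(n,k))` turns `HAO N` into the second-order
difference operator `a ↦ (n-k)(a(k+1) - a(k)) + k (a(k) - a(k-1))` (`HAO_mulVec_weighted`), which
sends `k ↦ binom(n-k, q+1)` to `-(n-q)` times `k ↦ binom(n-k, q)` and annihilates constants. The
factor `F` normalises these constants, so that the columns `u_q` of `QAO N` satisfy
`H u_{q+1} = u_q` and `H u_0 = 0`.

The matrix `QAO N` is invertible because Pascal's matrix with its rows reversed is unitriangular,
so `H^N = 0`; and `H^n u_n = u_0 ≠ 0`. A nilpotent matrix has spectrum `{0}`, and a diagonalizable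
nilpotent matrix vanishes, which contradicts `H^n ≠ 0` as soon as `n ≥ 1`.
-/

open Matrix Polynomial Finset

lemma gCoup_mul_sqrt_choose (n k : ℕ) :
    (gCoup (n + 1) k : ℂ) * (Real.sqrt (n.choose k) : ℂ) =
      ((k + 1 : ℕ) : ℂ) * (Real.sqrt (n.choose (k + 1)) : ℂ) := by
  have h := Nat.choose_succ_right_eq n k
  have key : gCoup (n + 1) k * Real.sqrt (n.choose k) =
      ((k + 1 : ℕ) : ℝ) * Real.sqrt (n.choose (k + 1)) := by
    have e : (((n + 1 - 1 - k) * (k + 1) : ℕ) : ℝ) * (n.choose k : ℝ) =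
        ((k + 1 : ℕ) : ℝ) ^ 2 * (n.choose (k + 1) : ℝ) := by
      norm_cast
      rw [Nat.add_sub_cancel]
      calc _ = (k + 1) * (n.choose k * (n - k)) := by ring
        _ = _ := by rw [← h]; ring
    rw [gCoup, ← Real.sqrt_mul (Nat.cast_nonneg _), e, Real.sqrt_mul (by positivity),
      Real.sqrt_sq (Nat.cast_nonneg _)]
  exact_mod_cast key

lemma gCoup_mul_sqrt_choose_succ (n k : ℕ) :
    (gCoup (n + 1) k : ℂ) * (Real.sqrt (n.choose (k + 1)) : ℂ) =
      ((n - k : ℕ) : ℂ) * (Real.sqrt (n.choose k) : ℂ) := by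
  have h := Nat.choose_succ_right_eq n k
  have key : gCoup (n + 1) k * Real.sqrt (n.choose (k + 1)) =
      ((n - k : ℕ) : ℝ) * Real.sqrt (n.choose k) := by
    have e : (((n + 1 - 1 - k) * (k + 1) : ℕ) : ℝ) * (n.choose (k + 1) : ℝ) =
        ((n - k : ℕ) : ℝ) ^ 2 * (n.choose k : ℝ) := by
      norm_cast
      rw [Nat.add_sub_cancel]
      calc _ = (n - k) * (n.choose (k + 1) * (k + 1)) := by ring
        _ = _ := by rw [h]; ring
    rw [gCoup, ← Real.sqrt_mul (Nat.cast_nonneg _), e, Real.sqrt_mul (by positivity),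
      Real.sqrt_sq (Nat.cast_nonneg _)]
  exact_mod_cast key

/-- The tridiagonal action of `HAO (n + 1)` on a vector given by a function on `ℕ`. The upper
coupling vanishes at `k = n`, so the value `w (n + 1)` is harmless. -/
lemma HAO_mulVec_apply (n : ℕ) (w : ℕ → ℂ) (k : Fin (n + 1)) :
    (HAO (n + 1) *ᵥ fun l : Fin (n + 1) => w l) k =
      (gCoup (n + 1) k : ℂ) * w (k + 1) - ((n : ℂ) - 2 * (k : ℕ)) * w k -
        (if (k : ℕ) = 0 then 0 else (gCoup (n + 1) (k - 1) : ℂ) * w (k - 1)) := by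
  obtain ⟨k, hk⟩ := k
  have hsplit : ∀ l : ℕ,
      (if k = l then -((((n + 1 : ℕ) : ℤ) - 1 - 2 * (k : ℕ) : ℤ) : ℂ)
        else if l = k + 1 then (gCoup (n + 1) k : ℂ)
        else if k = l + 1 then -(gCoup (n + 1) l : ℂ) else 0) * w l =
      (if l = k + 1 then (gCoup (n + 1) k : ℂ) * w (k + 1) else 0) -
      (if l = k then ((n : ℂ) - 2 * k) * w k else 0) -
      (if l = k - 1 then (if k = 0 then 0 else (gCoup (n + 1) (k - 1) : ℂ) * w (k - 1)) else 0) := by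
    intro l
    rcases lt_trichotomy l k with h | h | h
    · by_cases h' : k = l + 1
      · subst h'
        have : l ≠ l + 1 + 1 := by omega
        simp [this]
      · have h1 : k ≠ l := by omega
        have h2 : l ≠ k + 1 := by omega
        have h3 : l ≠ k - 1 := by omega
        simp [h1, h1.symm, h2, h3, h']
    · subst h
      rcases l with _ | l
      · simp
      · simp; ring
    · by_cases h' : l = k + 1
      · subst h'
        have : k + 1 ≠ k - 1 := by omega
        simp [this]
      · have h1 : k ≠ l := by omega
        have h2 : k ≠ l + 1 := by omega
        have h3 : l ≠ k - 1 := by omega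
        simp [h1, h1.symm, h2, h3, h']
  have hg : n ≤ k → gCoup (n + 1) k = 0 := by
    intro h
    simp [gCoup, Nat.sub_eq_zero_of_le h]
  simp only [Matrix.mulVec, dotProduct, HAO]
  rw [Fin.sum_univ_eq_sum_range (fun l : ℕ =>
      (if k = l then -((((n + 1 : ℕ) : ℤ) - 1 - 2 * (k : ℕ) : ℤ) : ℂ)
        else if l = k + 1 then (gCoup (n + 1) k : ℂ)
        else if k = l + 1 then -(gCoup (n + 1) l : ℂ) else 0) * w l) (n + 1)]
  rw [Finset.sum_congr rfl fun l _ => hsplit l, Finset.sum_sub_distrib, Finset.sum_sub_distrib,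
    Finset.sum_ite_eq', Finset.sum_ite_eq', Finset.sum_ite_eq']
  have h1 : k - 1 ∈ Finset.range (n + 1) := Finset.mem_range.2 (by omega)
  rw [if_pos (Finset.mem_range.2 hk), if_pos h1]
  by_cases h : k + 1 < n + 1
  · rw [if_pos (Finset.mem_range.2 h)]
  · rw [if_neg (by simpa using h), hg (by omega)]
    simp

/-- Conjugating by the weights `√(binom(n,k))` removes the square roots from `HAO`: its action
becomes `a ↦ (n-k) a(k+1) - (n-2k) a(k) - k a(k-1)`, that is
`(n-k)(a(k+1) - a(k)) + k (a(k) - a(k-1))`. At `k = 0` the junk value `a (0 - 1)` has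
coefficient zero. -/
lemma HAO_mulVec_weighted (n : ℕ) (a : ℕ → ℂ) (k : Fin (n + 1)) :
    (HAO (n + 1) *ᵥ fun l : Fin (n + 1) => (Real.sqrt (n.choose l) : ℂ) * a l) k =
      (Real.sqrt (n.choose k) : ℂ) * (((n - k : ℕ) : ℂ) * a (k + 1) -
        ((n : ℂ) - 2 * (k : ℕ)) * a k - (k : ℕ) * a (k - 1)) := by
  rw [HAO_mulVec_apply n (fun l => (Real.sqrt (n.choose l) : ℂ) * a l) k]
  obtain ⟨k, hk⟩ := k
  have h1 := gCoup_mul_sqrt_choose_succ n k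
  rcases k with _ | k
  · simp only [if_true]
    linear_combination a (0 + 1) * h1
  · have h2 := gCoup_mul_sqrt_choose n k
    simp only [Nat.add_eq_zero_iff, one_ne_zero, and_false, if_false, Nat.add_sub_cancel]
    linear_combination a (k + 1 + 1) * h1 - a k * h2

lemma mul_choose_pred (m q : ℕ) :
    (m : ℂ) * ((m - 1).choose (q + 1) : ℂ) =
      m * (m.choose (q + 1) : ℂ) - ((m : ℂ) - q) * (m.choose q : ℂ) := by
  rcases m with _ | m
  · rcases q with _ | q <;> simp
  · have h1 : ((m : ℂ) + 1) * (m.choose q : ℂ) = ((m + 1).choose (q + 1) : ℂ) * (q + 1) := by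
      exact_mod_cast Nat.add_one_mul_choose_eq m q
    have h2 : ((m + 1).choose (q + 1) : ℂ) = (m.choose q : ℂ) + (m.choose (q + 1) : ℂ) := by
      exact_mod_cast Nat.choose_succ_succ m q
    have h3 : ((m + 1).choose (q + 1) : ℂ) * (q + 1) =
        ((m + 1).choose q : ℂ) * ((m : ℂ) + 1 - q) := by
      rcases le_or_gt q (m + 1) with h | h
      · have := Nat.choose_succ_right_eq (m + 1) q
        rw [← Nat.cast_inj (R := ℂ)] at this
        push_cast [Nat.cast_sub h] at this
        exact this
      · rw [Nat.choose_eq_zero_of_lt h, Nat.choose_eq_zero_of_lt (by omega)]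
        simp
    rw [Nat.add_sub_cancel]
    push_cast
    linear_combination -h1 - ((m : ℂ) + 1) * h2 - h3

/-- Column `q` of the transition matrix `QAO N`: the Jordan chain of `HAO N`, with the column
index extended to `ℕ`. -/
noncomputable def chainVec (N q : ℕ) : Fin N → ℂ := fun k =>
  (Real.sqrt ((N - 1).choose k) : ℂ) *
    (((N - 1 - k).choose q : ℂ) * ((-1 : ℂ) ^ (N - 1 - q) * ((N - 1 - q).factorial : ℂ)))

lemma HAO_mulVec_chainVec_succ (n q : ℕ) (hq : q < n) :
    HAO (n + 1) *ᵥ chainVec (n + 1) (q + 1) = chainVec (n + 1) q := by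
  obtain ⟨r, rfl⟩ : ∃ r, n = q + 1 + r := ⟨n - q - 1, by omega⟩
  ext k
  have h := HAO_mulVec_weighted (q + 1 + r) (fun l => ((q + 1 + r - l).choose (q + 1) : ℂ) *
    ((-1 : ℂ) ^ (q + 1 + r - (q + 1)) * ((q + 1 + r - (q + 1)).factorial : ℂ))) k
  refine h.trans ?_
  obtain ⟨k, hk⟩ := k
  obtain ⟨m, hm⟩ : ∃ m, q + 1 + r = k + m := ⟨q + 1 + r - k, by omega⟩
  have e1 : q + 1 + r - (q + 1) = r := by omega
  have e2 : q + 1 + r - q = r + 1 := by omega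
  have e3 : q + 1 + r - k = m := by omega
  have e4 : q + 1 + r - (k + 1) = m - 1 := by omega
  have hc := mul_choose_pred m q
  have hmC : (q : ℂ) + 1 + r = k + m := by exact_mod_cast hm
  -- Pascal's rule for the left neighbour; vacuous at `k = 0`, where its coefficient vanishes.
  have hp : (k : ℂ) * ((q + 1 + r - (k - 1)).choose (q + 1) : ℂ) =
      k * ((m.choose q : ℂ) + (m.choose (q + 1) : ℂ)) := by
    rcases k with _ | k
    · simp
    · have : q + 1 + r - (k + 1 - 1) = m + 1 := by omega
      rw [this, Nat.choose_succ_succ]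
      push_cast
      ring
  simp only [chainVec, Nat.add_sub_cancel, e1, e2, e3, e4]
  rw [Nat.factorial_succ, pow_succ]
  push_cast
  have hr : (r : ℂ) + 1 = k + m - q := by linear_combination hmC
  rw [hr, hmC]
  linear_combination (Real.sqrt ((q + 1 + r).choose k) : ℂ) * (-1) ^ r * (r.factorial : ℂ) *
    (hc - hp)

lemma HAO_mulVec_chainVec_zero (n : ℕ) :
    HAO (n + 1) *ᵥ chainVec (n + 1) 0 = 0 := by
  ext k
  have h := HAO_mulVec_weighted n (fun l => ((n - l).choose 0 : ℂ) *
    ((-1 : ℂ) ^ (n - 0) * ((n - 0).factorial : ℂ))) k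
  refine h.trans ?_
  have hk : (k : ℕ) ≤ n := by omega
  simp only [Nat.choose_zero_right, Nat.cast_sub hk, Pi.zero_apply]
  ring

lemma HAO_pow_mulVec_chainVec (n j q : ℕ) (hq : q + j ≤ n) :
    HAO (n + 1) ^ j *ᵥ chainVec (n + 1) (q + j) = chainVec (n + 1) q := by
  induction j with
  | zero => simp
  | succ j ih =>
    rw [pow_succ, ← Matrix.mulVec_mulVec, ← add_assoc,
      HAO_mulVec_chainVec_succ n (q + j) (by omega), ih (by omega)]

lemma isUnit_Pmat (n : ℕ) : IsUnit (Pmat (n + 1)) := by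
  -- Reversing the rows turns `P` into the unitriangular matrix `binom(i, q)`.
  rw [← Matrix.isUnit_submatrix_equiv (Fin.revPerm (n := n + 1)) (Equiv.refl _),
    Matrix.isUnit_iff_isUnit_det]
  have hentry : ∀ i j : Fin (n + 1),
      (Pmat (n + 1)).submatrix Fin.revPerm (Equiv.refl _) i j = ((i : ℕ).choose j : ℂ) := by
    intro i j
    have : n + 1 - 1 - ((Fin.rev i : Fin (n + 1)) : ℕ) = i := by
      rw [Fin.val_rev]; omega
    simp only [Matrix.submatrix_apply, Pmat, Fin.revPerm_apply, Equiv.refl_apply, this]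
  rw [Matrix.det_of_isLowerTriangular]
  · simp only [hentry, Nat.choose_self, Nat.cast_one, Finset.prod_const_one, isUnit_one]
  · intro i j hij
    have hlt : (i : ℕ) < j := OrderDual.toDual_lt_toDual.1 hij
    rw [hentry, Nat.choose_eq_zero_of_lt hlt, Nat.cast_zero]

lemma isUnit_QAO (n : ℕ) : IsUnit (QAO (n + 1)) := by
  refine ((Matrix.isUnit_diagonal.2 ?_).mul (isUnit_Pmat n)).mul (Matrix.isUnit_diagonal.2 ?_)
  · rw [Pi.isUnit_iff]
    intro k
    have : 0 < (n.choose k : ℝ) := by exact_mod_cast Nat.choose_pos (by omega)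
    simpa using (Real.sqrt_pos.2 this).ne'
  · rw [Pi.isUnit_iff]
    intro k
    simp [Nat.factorial_ne_zero]

lemma QAO_col (n : ℕ) (q : Fin (n + 1)) : (QAO (n + 1)).col q = chainVec (n + 1) q := by
  ext k
  simp [QAO, Cmat, Fmat, Pmat, chainVec, Matrix.diagonal_mul, Matrix.mul_diagonal, mul_assoc]

lemma HAO_pow_eq_zero (n : ℕ) : HAO (n + 1) ^ (n + 1) = 0 := by
  have h : HAO (n + 1) ^ (n + 1) * QAO (n + 1) = 0 := by
    refine Matrix.ext_col fun q => ?_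
    have hcol : (HAO (n + 1) ^ (n + 1) * QAO (n + 1)).col q =
        HAO (n + 1) ^ (n + 1) *ᵥ (QAO (n + 1)).col q := rfl
    have e := HAO_pow_mulVec_chainVec n q 0 (by omega)
    rw [zero_add] at e
    have hsplit : HAO (n + 1) ^ (n + 1) =
        HAO (n + 1) ^ (n - (q : ℕ)) * HAO (n + 1) * HAO (n + 1) ^ (q : ℕ) := by
      rw [← pow_succ, ← pow_add]
      congr 1
      omega
    rw [hcol, QAO_col, hsplit, ← Matrix.mulVec_mulVec, e, ← Matrix.mulVec_mulVec,
      HAO_mulVec_chainVec_zero, Matrix.mulVec_zero]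
    rfl
  exact (isUnit_QAO n).mul_left_eq_zero.1 h

lemma HAO_pow_pred_ne_zero (n : ℕ) : HAO (n + 1) ^ n ≠ 0 := by
  intro h
  have e := HAO_pow_mulVec_chainVec n n 0 (by omega)
  rw [h, Matrix.zero_mulVec] at e
  have e0 := congrFun e 0
  simp [chainVec, Nat.factorial_ne_zero] at e0

/-- the EP anharmonic-oscillator Hamiltonian is nilpotent of index
exactly `N`, its spectrum is `{0}`, and (for `N ≥ 2`) it is not diagonalizable. -/
theorem ao_ep_nilpotent (N : ℕ) (hN : 1 ≤ N) :
    HAO N ^ N = 0 ∧ HAO N ^ (N - 1) ≠ 0 ∧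
      spectrum ℂ (HAO N) = {0} ∧
      (2 ≤ N →
        ¬ ∃ (T : Matrix (Fin N) (Fin N) ℂ) (d : Fin N → ℂ),
          IsUnit T ∧ HAO N = T * Matrix.diagonal d * T⁻¹) := by
  obtain ⟨n, rfl⟩ : ∃ n, N = n + 1 := ⟨N - 1, by omega⟩
  have hpow := HAO_pow_eq_zero n
  have hne := HAO_pow_pred_ne_zero n
  refine ⟨hpow, hne, ?_, ?_⟩
  · refine Set.Nonempty.subset_singleton_iff (spectrum.nonempty_of_isAlgClosed_of_finiteDimensional
      ℂ (HAO (n + 1))) |>.1 ?_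
    intro μ hμ
    have h := spectrum.pow_mem_pow (HAO (n + 1)) (n + 1) hμ
    rw [hpow, spectrum.zero_eq] at h
    exact pow_eq_zero_iff (Nat.succ_ne_zero n) |>.1 h
  · rintro h2 ⟨T, d, hT, hd⟩
    have hdet := (Matrix.isUnit_iff_isUnit_det T).1 hT
    have hTpow : ∀ j, HAO (n + 1) ^ j * T = T * Matrix.diagonal d ^ j := by
      have h1 : HAO (n + 1) * T = T * Matrix.diagonal d := by
        rw [hd, Matrix.mul_assoc, Matrix.nonsing_inv_mul T hdet, Matrix.mul_one]
      intro j
      exact (SemiconjBy.pow_right (show SemiconjBy T (Matrix.diagonal d) (HAO (n + 1)) from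
        h1.symm) j).eq.symm
    have h0 : Matrix.diagonal d ^ (n + 1) = 0 := by
      refine hT.mul_right_eq_zero.1 ?_
      rw [← hTpow, hpow, Matrix.zero_mul]
    have hd0 : d = 0 := by
      rw [Matrix.diagonal_pow, Matrix.diagonal_eq_zero] at h0
      exact pow_eq_zero_iff (Nat.succ_ne_zero n) |>.1 h0
    have hH : HAO (n + 1) = 0 := by rw [hd, hd0]; simp
    exact hne (by rw [hH, zero_pow (by omega)])
end
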